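/- arXiv:2205.03723 — 3 statements merged into one kernel-verified Lean document; each statement's English description precedes it below -/
import Mathlib

section
/- If (s, β, V) is a bimodule of an ε-commutative Hom-associative color Hom-algebra (A, ·, ε, α), then A ⊕ V equipped with the product (x₁+v₁)∗(x₂+v₂) = x₁·x₂ + s(x₁)v₂ + ε(v₁,x₂)s(x₂)v₁ and twisting map α⊕β is again an ε-commutative Hom-associative color Hom-algebra. -/
open scoped TensorProduct

section ColorHomDefs

variable {K Γ A V : Type*} [Field K] [AddCommGroup Γ]
variable [AddCommGroup A] [Module K A] [AddCommGroup V] [Module K V]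

/-- A commutation factor (skew-symmetric bicharacter) on `Γ` with values in `K`. -/
def IsCommFactor (ε : Γ → Γ → K) : Prop :=
  (∀ a b, ε a b ≠ 0) ∧ (∀ a b, ε a b * ε b a = 1) ∧
    (∀ a b c, ε a (b + c) = ε a b * ε a c) ∧
    (∀ a b c, ε (a + b) c = ε a c * ε b c)

/-- The (even bilinear) product respects the grading. -/
def GradedMul (𝒜 : Γ → Submodule K A) (μ : A →ₗ[K] A →ₗ[K] A) : Prop :=
  ∀ ⦃γ₁ γ₂ : Γ⦄ ⦃x y : A⦄, x ∈ 𝒜 γ₁ → y ∈ 𝒜 γ₂ → μ x y ∈ 𝒜 (γ₁ + γ₂)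

/-- An even linear map. -/
def GradedEnd (𝒜 : Γ → Submodule K A) (f : A →ₗ[K] A) : Prop :=
  ∀ ⦃γ : Γ⦄ ⦃x : A⦄, x ∈ 𝒜 γ → f x ∈ 𝒜 γ

/-- ε-commutativity on homogeneous elements. -/
def IsEpsComm (𝒜 : Γ → Submodule K A) (ε : Γ → Γ → K) (μ : A →ₗ[K] A →ₗ[K] A) : Prop :=
  ∀ ⦃γ₁ γ₂ : Γ⦄ ⦃x y : A⦄, x ∈ 𝒜 γ₁ → y ∈ 𝒜 γ₂ → μ x y = ε γ₁ γ₂ • μ y x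

/-- Hom-associativity on homogeneous elements. -/
def IsHomAssoc (𝒜 : Γ → Submodule K A) (μ : A →ₗ[K] A →ₗ[K] A) (α : A →ₗ[K] A) : Prop :=
  ∀ ⦃γ₁ γ₂ γ₃ : Γ⦄ ⦃x y z : A⦄, x ∈ 𝒜 γ₁ → y ∈ 𝒜 γ₂ → z ∈ 𝒜 γ₃ →
    μ (μ x y) (α z) = μ (α x) (μ y z)

/-- The two defining identities of a Hom-Novikov color Hom-algebra. -/
def IsHomNovikov (𝒜 : Γ → Submodule K A) (ε : Γ → Γ → K) (μ : A →ₗ[K] A →ₗ[K] A)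
    (α : A →ₗ[K] A) : Prop :=
  (∀ ⦃γ₁ γ₂ γ₃ : Γ⦄ ⦃x y z : A⦄, x ∈ 𝒜 γ₁ → y ∈ 𝒜 γ₂ → z ∈ 𝒜 γ₃ →
      μ (μ x y) (α z) - μ (α x) (μ y z)
        = ε γ₁ γ₂ • (μ (μ y x) (α z) - μ (α y) (μ x z))) ∧
  (∀ ⦃γ₁ γ₂ γ₃ : Γ⦄ ⦃x y z : A⦄, x ∈ 𝒜 γ₁ → y ∈ 𝒜 γ₂ → z ∈ 𝒜 γ₃ →
      μ (μ x y) (α z) = ε γ₂ γ₃ • μ (μ x z) (α y))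

/-- ε-skew-symmetry and the ε-Hom-Jacobi identity for a bilinear bracket. -/
def IsHomLie (𝒜 : Γ → Submodule K A) (ε : Γ → Γ → K) (br : A →ₗ[K] A →ₗ[K] A)
    (α : A →ₗ[K] A) : Prop :=
  (∀ ⦃γ₁ γ₂ : Γ⦄ ⦃x y : A⦄, x ∈ 𝒜 γ₁ → y ∈ 𝒜 γ₂ → br x y = -(ε γ₁ γ₂ • br y x)) ∧
  (∀ ⦃γ₁ γ₂ γ₃ : Γ⦄ ⦃x y z : A⦄, x ∈ 𝒜 γ₁ → y ∈ 𝒜 γ₂ → z ∈ 𝒜 γ₃ →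
      ε γ₃ γ₁ • br (α x) (br y z) + ε γ₁ γ₂ • br (α y) (br z x)
        + ε γ₂ γ₃ • br (α z) (br x y) = 0)

/-- Compatibility conditions of a Hom-Novikov-Poisson color Hom-algebra. -/
def HNPCompat (𝒜 : Γ → Submodule K A) (ε : Γ → Γ → K) (μ d : A →ₗ[K] A →ₗ[K] A)
    (α : A →ₗ[K] A) : Prop :=
  (∀ ⦃γ₁ γ₂ γ₃ : Γ⦄ ⦃x y z : A⦄, x ∈ 𝒜 γ₁ → y ∈ 𝒜 γ₂ → z ∈ 𝒜 γ₃ →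
      d (μ x y) (α z) = ε γ₂ γ₃ • μ (d x z) (α y)) ∧
  (∀ ⦃γ₁ γ₂ γ₃ : Γ⦄ ⦃x y z : A⦄, x ∈ 𝒜 γ₁ → y ∈ 𝒜 γ₂ → z ∈ 𝒜 γ₃ →
      μ (d x y) (α z) - d (α x) (μ y z)
        = ε γ₁ γ₂ • (μ (d y x) (α z) - d (α y) (μ x z)))

/-- Hom-Novikov-Poisson color Hom-algebra: `μ` is the ε-commutative Hom-associative
product, `d` the Hom-Novikov product. -/
def IsHNP (𝒜 : Γ → Submodule K A) (ε : Γ → Γ → K) (μ d : A →ₗ[K] A →ₗ[K] A)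
    (α : A →ₗ[K] A) : Prop :=
  GradedMul 𝒜 μ ∧ GradedMul 𝒜 d ∧ GradedEnd 𝒜 α ∧
    IsEpsComm 𝒜 ε μ ∧ IsHomAssoc 𝒜 μ α ∧ IsHomNovikov 𝒜 ε d α ∧ HNPCompat 𝒜 ε μ d α

/-- Admissibility: the left Hom-associator mixing the two products vanishes. -/
def IsAdmissibleHNP (𝒜 : Γ → Submodule K A) (ε : Γ → Γ → K) (μ d : A →ₗ[K] A →ₗ[K] A)
    (α : A →ₗ[K] A) : Prop :=
  IsHNP 𝒜 ε μ d α ∧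
    ∀ ⦃γ₁ γ₂ γ₃ : Γ⦄ ⦃x y z : A⦄, x ∈ 𝒜 γ₁ → y ∈ 𝒜 γ₂ → z ∈ 𝒜 γ₃ →
      d (μ x y) (α z) = d (α x) (μ y z)

/-- Gelfand-Dorfman compatibility for a bilinear bracket. -/
def GDCompat (𝒜 : Γ → Submodule K A) (ε : Γ → Γ → K) (μ br : A →ₗ[K] A →ₗ[K] A)
    (α : A →ₗ[K] A) : Prop :=
  ∀ ⦃γ₁ γ₂ γ₃ : Γ⦄ ⦃x y z : A⦄, x ∈ 𝒜 γ₁ → y ∈ 𝒜 γ₂ → z ∈ 𝒜 γ₃ →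
    μ (α y) (br x z)
      = ε γ₂ γ₁ • br (α x) (μ y z) - ε (γ₁ + γ₂) γ₃ • br (α z) (μ y x)
        + μ (br y x) (α z) - ε γ₁ γ₃ • μ (br y z) (α x)

/-- The transposed Hom-ε-Leibniz identity. -/
def TransposedLeibniz (𝒜 : Γ → Submodule K A) (ε : Γ → Γ → K) (μ br : A →ₗ[K] A →ₗ[K] A)
    (α : A →ₗ[K] A) : Prop :=
  ∀ ⦃γ₁ γ₂ γ₃ : Γ⦄ ⦃x y z : A⦄, x ∈ 𝒜 γ₁ → y ∈ 𝒜 γ₂ → z ∈ 𝒜 γ₃ →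
    (2 : K) • μ (α z) (br x y) = br (μ z x) (α y) + ε γ₃ γ₁ • br (α x) (μ z y)

/-- The ε-commutator bracket of homogeneous elements of degrees `γ`, `δ`. -/
def brkt (ε : Γ → Γ → K) (μ : A →ₗ[K] A →ₗ[K] A) (γ δ : Γ) (x y : A) : A :=
  μ x y - ε γ δ • μ y x

/-- The Yau twist `x ∗ y = α (μ x y)` of a bilinear product. -/
def twistMul (α : A →ₗ[K] A) (μ : A →ₗ[K] A →ₗ[K] A) : A →ₗ[K] A →ₗ[K] A :=
  (LinearMap.llcomp K A A A α).comp μ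

/-- The product `x ⋄ y = μ x (D y)`. -/
def precompMul (D : A →ₗ[K] A) (μ : A →ₗ[K] A →ₗ[K] A) : A →ₗ[K] A →ₗ[K] A :=
  (LinearMap.lcomp K A D).comp μ

/-- Semidirect product of an ε-commutative Hom-associative color Hom-algebra with a
bimodule, on homogeneous elements of degrees `γ₁`, `γ₂`. -/
def sdDot (ε : Γ → Γ → K) (μ : A →ₗ[K] A →ₗ[K] A) (s : A →ₗ[K] V →ₗ[K] V)
    (γ₁ γ₂ : Γ) (X Y : A × V) : A × V :=
  (μ X.1 Y.1, s X.1 Y.2 + ε γ₁ γ₂ • s Y.1 X.2)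

/-- Semidirect product of a Hom-Novikov color Hom-algebra with a bimodule. -/
def sdDiam (μ : A →ₗ[K] A →ₗ[K] A) (l r : A →ₗ[K] V →ₗ[K] V) (X Y : A × V) : A × V :=
  (μ X.1 Y.1, l X.1 Y.2 + r Y.1 X.2)

/-- Semidirect product bracket of a Hom-Lie color Hom-algebra with a representation. -/
def sdBr (ε : Γ → Γ → K) (br : A →ₗ[K] A →ₗ[K] A) (ρ : A →ₗ[K] V →ₗ[K] V)
    (γ₁ γ₂ : Γ) (X Y : A × V) : A × V :=
  (br X.1 Y.1, ρ X.1 Y.2 - ε γ₁ γ₂ • ρ Y.1 X.2)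

/-- The twisting map `α ⊕ β` on `A × V`. -/
def sdEnd (α : A →ₗ[K] A) (β : V →ₗ[K] V) (X : A × V) : A × V := (α X.1, β X.2)

end ColorHomDefs

/-!
In the `V`-component of Hom-associativity, the terms coming from the `V`-component of the third
factor match by the bimodule identity. The other two pairs of terms match because
`s (α x) ∘ s y` and `s (α y) ∘ s x` differ only by the commutation factor of the degrees of `x`
and `y`; the remaining factors agree since `ε` is a bicharacter.
-/

section SemidirectProduct

variable {K Γ A V : Type*} [Field K]
variable [AddCommGroup A] [Module K A] [AddCommGroup V] [Module K V]
variable {𝒜 : Γ → Submodule K A} {𝒱 : Γ → Submodule K V} {ε : Γ → Γ → K}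
variable {μ : A →ₗ[K] A →ₗ[K] A} {α : A →ₗ[K] A} {β : V →ₗ[K] V} {s : A →ₗ[K] V →ₗ[K] V}

/-- The bimodule identity for `(s, β, V)` over `(A, μ, α)`, on homogeneous elements. The evenness
of `s` and of the twisting maps is kept apart from it. -/
def IsHomBimodule (𝒜 : Γ → Submodule K A) (𝒱 : Γ → Submodule K V) (μ : A →ₗ[K] A →ₗ[K] A)
    (α : A →ₗ[K] A) (β : V →ₗ[K] V) (s : A →ₗ[K] V →ₗ[K] V) : Prop :=
  ∀ ⦃γ₁ γ₂ γ₃ : Γ⦄ ⦃x y : A⦄ ⦃v : V⦄, x ∈ 𝒜 γ₁ → y ∈ 𝒜 γ₂ → v ∈ 𝒱 γ₃ →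
    s (μ x y) (β v) = s (α x) (s y v)

theorem IsHomBimodule.act_act_eq_smul_swap (hs : IsHomBimodule 𝒜 𝒱 μ α β s)
    (hμ : IsEpsComm 𝒜 ε μ) {a b c : Γ} {x y : A} {v : V}
    (hx : x ∈ 𝒜 a) (hy : y ∈ 𝒜 b) (hv : v ∈ 𝒱 c) :
    s (α x) (s y v) = ε a b • s (α y) (s x v) :=
  calc
    s (α x) (s y v) = s (μ x y) (β v) := (hs hx hy hv).symm
    _ = ε a b • s (μ y x) (β v) := by rw [hμ hx hy, map_smul, LinearMap.smul_apply]
    _ = ε a b • s (α y) (s x v) := by rw [hs hy hx hv]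

variable [AddCommGroup Γ]

namespace IsCommFactor

theorem mul_swap (hε : IsCommFactor ε) (a b : Γ) : ε a b * ε b a = 1 :=
  hε.2.1 a b

theorem add_right (hε : IsCommFactor ε) (a b c : Γ) : ε a (b + c) = ε a b * ε a c :=
  hε.2.2.1 a b c

theorem add_left (hε : IsCommFactor ε) (a b c : Γ) : ε (a + b) c = ε a c * ε b c :=
  hε.2.2.2 a b c

end IsCommFactor

/-- An even action `s` of the graded space `A` on the graded space `V`. -/
def GradedAction (𝒜 : Γ → Submodule K A) (𝒱 : Γ → Submodule K V)
    (s : A →ₗ[K] V →ₗ[K] V) : Prop :=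
  ∀ ⦃γ₁ γ₂ : Γ⦄ ⦃x : A⦄ ⦃v : V⦄, x ∈ 𝒜 γ₁ → v ∈ 𝒱 γ₂ → s x v ∈ 𝒱 (γ₁ + γ₂)

theorem sdDot_mem_prod (hμ : GradedMul 𝒜 μ) (hs : GradedAction 𝒜 𝒱 s) {a b : Γ} {X Y : A × V}
    (hX : X ∈ (𝒜 a).prod (𝒱 a)) (hY : Y ∈ (𝒜 b).prod (𝒱 b)) :
    sdDot ε μ s a b X Y ∈ (𝒜 (a + b)).prod (𝒱 (a + b)) := by
  have hYX : s Y.1 X.2 ∈ 𝒱 (a + b) := add_comm b a ▸ hs hY.1 hX.2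
  exact ⟨hμ hX.1 hY.1, add_mem (hs hX.1 hY.2) (Submodule.smul_mem _ _ hYX)⟩

theorem sdDot_eq_smul_swap (hε : IsCommFactor ε) (hμ : IsEpsComm 𝒜 ε μ) {a b : Γ} {X Y : A × V}
    (hX : X.1 ∈ 𝒜 a) (hY : Y.1 ∈ 𝒜 b) :
    sdDot ε μ s a b X Y = ε a b • sdDot ε μ s b a Y X := by
  refine Prod.ext (hμ hX hY) ?_
  calc
    s X.1 Y.2 + ε a b • s Y.1 X.2 = ε a b • s Y.1 X.2 + (ε a b * ε b a) • s X.1 Y.2 := by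
      rw [hε.mul_swap, one_smul, add_comm]
    _ = ε a b • (s Y.1 X.2 + ε b a • s X.1 Y.2) := by rw [smul_add, mul_smul]

theorem sdDot_homAssoc (hε : IsCommFactor ε) (hcomm : IsEpsComm 𝒜 ε μ)
    (hassoc : IsHomAssoc 𝒜 μ α) (hs : IsHomBimodule 𝒜 𝒱 μ α β s) {a b c : Γ} {X Y Z : A × V}
    (hX : X ∈ (𝒜 a).prod (𝒱 a)) (hY : Y ∈ (𝒜 b).prod (𝒱 b)) (hZ : Z ∈ (𝒜 c).prod (𝒱 c)) :
    sdDot ε μ s (a + b) c (sdDot ε μ s a b X Y) (sdEnd α β Z) =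
      sdDot ε μ s a (b + c) (sdEnd α β X) (sdDot ε μ s b c Y Z) := by
  obtain ⟨x, u⟩ := X
  obtain ⟨y, v⟩ := Y
  obtain ⟨z, w⟩ := Z
  obtain ⟨hx : x ∈ 𝒜 a, hu : u ∈ 𝒱 a⟩ := hX
  obtain ⟨hy : y ∈ 𝒜 b, hv : v ∈ 𝒱 b⟩ := hY
  obtain ⟨hz : z ∈ 𝒜 c, hw : w ∈ 𝒱 c⟩ := hZ
  have hu_terms : (ε (a + b) c * ε a b) • s (α z) (s y u) = ε a (b + c) • s (μ y z) (β u) := by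
    rw [hs hy hz hu, hs.act_act_eq_smul_swap hcomm hy hz hu, smul_smul, hε.add_left, hε.add_right]
    congr 1
    ring
  have hv_terms : ε (a + b) c • s (α z) (s x v) = ε b c • s (α x) (s z v) := by
    rw [hs.act_act_eq_smul_swap hcomm hx hz hv, smul_smul, hε.add_left, mul_comm]
  refine Prod.ext (hassoc hx hy hz) ?_
  calc
    s (μ x y) (β w) + ε (a + b) c • s (α z) (s x v + ε a b • s y u)
    _ = s (μ x y) (β w) + ε (a + b) c • s (α z) (s x v)
          + (ε (a + b) c * ε a b) • s (α z) (s y u) := by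
      rw [map_add, map_smul, smul_add, smul_smul, add_assoc]
    _ = s (α x) (s y w) + ε b c • s (α x) (s z v) + ε a (b + c) • s (μ y z) (β u) := by
      rw [hs hx hy hw, hv_terms, hu_terms]
    _ = s (α x) (s y w + ε b c • s z v) + ε a (b + c) • s (μ y z) (β u) := by
      rw [map_add, map_smul]

end SemidirectProduct

/-- semidirect product of an ε-commutative Hom-associative color
Hom-algebra with a bimodule `(s, β, V)`. -/
theorem semidirect_epsComm_homAssoc
    {K Γ A V : Type*} [Field K] [AddCommGroup Γ] [AddCommGroup A] [Module K A]
    [AddCommGroup V] [Module K V]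
    (𝒜 : Γ → Submodule K A) (𝒱 : Γ → Submodule K V) (ε : Γ → Γ → K)
    (μ : A →ₗ[K] A →ₗ[K] A) (α : A →ₗ[K] A) (β : V →ₗ[K] V) (s : A →ₗ[K] V →ₗ[K] V)
    (hε : IsCommFactor ε) (hμ : GradedMul 𝒜 μ) (hα : GradedEnd 𝒜 α)
    (hβ : ∀ ⦃γ : Γ⦄ ⦃v : V⦄, v ∈ 𝒱 γ → β v ∈ 𝒱 γ)
    (hs : ∀ ⦃γ₁ γ₂ : Γ⦄ ⦃x : A⦄ ⦃v : V⦄, x ∈ 𝒜 γ₁ → v ∈ 𝒱 γ₂ → s x v ∈ 𝒱 (γ₁ + γ₂))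
    (hcomm : IsEpsComm 𝒜 ε μ) (hassoc : IsHomAssoc 𝒜 μ α)
    (hbimod : ∀ ⦃γ₁ γ₂ γ₃ : Γ⦄ ⦃x y : A⦄ ⦃v : V⦄, x ∈ 𝒜 γ₁ → y ∈ 𝒜 γ₂ → v ∈ 𝒱 γ₃ →
      s (μ x y) (β v) = s (α x) (s y v)) :
    (∀ ⦃γ₁ γ₂ : Γ⦄ ⦃X Y : A × V⦄, X ∈ (𝒜 γ₁).prod (𝒱 γ₁) → Y ∈ (𝒜 γ₂).prod (𝒱 γ₂) →
        sdDot ε μ s γ₁ γ₂ X Y ∈ (𝒜 (γ₁ + γ₂)).prod (𝒱 (γ₁ + γ₂))) ∧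
    (∀ ⦃γ₁ γ₂ : Γ⦄ ⦃X Y : A × V⦄, X ∈ (𝒜 γ₁).prod (𝒱 γ₁) → Y ∈ (𝒜 γ₂).prod (𝒱 γ₂) →
        sdDot ε μ s γ₁ γ₂ X Y = ε γ₁ γ₂ • sdDot ε μ s γ₂ γ₁ Y X) ∧
    (∀ ⦃γ₁ γ₂ γ₃ : Γ⦄ ⦃X Y Z : A × V⦄, X ∈ (𝒜 γ₁).prod (𝒱 γ₁) →
        Y ∈ (𝒜 γ₂).prod (𝒱 γ₂) → Z ∈ (𝒜 γ₃).prod (𝒱 γ₃) →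
        sdDot ε μ s (γ₁ + γ₂) γ₃ (sdDot ε μ s γ₁ γ₂ X Y) (sdEnd α β Z)
          = sdDot ε μ s γ₁ (γ₂ + γ₃) (sdEnd α β X) (sdDot ε μ s γ₂ γ₃ Y Z)) := by
  refine ⟨fun _ _ _ _ hX hY => ?_, fun _ _ _ _ hX hY => ?_, fun _ _ _ _ _ _ hX hY hZ => ?_⟩
  · exact sdDot_mem_prod hμ hs hX hY
  · exact sdDot_eq_smul_swap hε hcomm hX.1 hY.1
  · exact sdDot_homAssoc hε hcomm hassoc hbimod hX hY hZ
end

section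
/- If (A, ·, ε, α) is a Hom-Novikov color Hom-algebra, then the bracket [x,y] = x·y − ε(x,y) y·x makes (A, [·,·], ε, α) a Hom-Lie color Hom-algebra. -/
open scoped TensorProduct

/-!
The ε-Hom-Jacobi sum of the ε-commutator of an arbitrary bilinear product is the cyclic sum of the
ε-skew-symmetrizations of its Hom-associator in the first two arguments. The first Hom-Novikov
identity says exactly that each of these skew-symmetrizations vanishes.
-/

/-- The Hom-associator `(x · y) · α z - α x · (y · z)` of a bilinear product, which measures the
failure of Hom-associativity. -/
def homAssociator {R M : Type*} [CommRing R] [AddCommGroup M] [Module R M]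
    (μ : M →ₗ[R] M →ₗ[R] M) (α : M →ₗ[R] M) (x y z : M) : M :=
  μ (μ x y) (α z) - μ (α x) (μ y z)

/-- The identity defining Hom-left-symmetric (Hom-pre-Lie) color algebras: the Hom-associator is
ε-symmetric in its first two arguments. As in `IsHomNovikov`, it is imposed on homogeneous elements
only, and evenness of `μ` and `α` is not part of it. -/
def IsHomLeftSymmetric {R ι M : Type*} [CommRing R] [AddCommGroup M] [Module R M]
    (𝒜 : ι → Submodule R M) (ε : ι → ι → R) (μ : M →ₗ[R] M →ₗ[R] M) (α : M →ₗ[R] M) : Prop :=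
  ∀ ⦃i j k : ι⦄ ⦃x y z : M⦄, x ∈ 𝒜 i → y ∈ 𝒜 j → z ∈ 𝒜 k →
    homAssociator μ α x y z = ε i j • homAssociator μ α y x z

section

variable {K Γ A : Type*} [Field K] [AddCommGroup A] [Module K A]
  {𝒜 : Γ → Submodule K A} {ε : Γ → Γ → K} {μ : A →ₗ[K] A →ₗ[K] A} {α : A →ₗ[K] A}

theorem IsHomNovikov.isHomLeftSymmetric (h : IsHomNovikov 𝒜 ε μ α) :
    IsHomLeftSymmetric 𝒜 ε μ α :=
  h.1

theorem brkt_eq_neg_smul_brkt {a b : Γ} (hab : ε a b * ε b a = 1) (x y : A) :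
    brkt ε μ a b x y = -(ε a b • brkt ε μ b a y x) := by
  simp only [brkt, smul_sub, smul_smul, hab, one_smul, neg_sub]

variable [AddCommGroup Γ]

theorem IsCommFactor.mul_swap_s4 (hε : IsCommFactor ε) (a b : Γ) : ε a b * ε b a = 1 :=
  hε.2.1 a b

theorem IsCommFactor.apply_add_right (hε : IsCommFactor ε) (a b c : Γ) :
    ε a (b + c) = ε a b * ε a c :=
  hε.2.2.1 a b c

theorem IsCommFactor.mul_apply_add_right (hε : IsCommFactor ε) (a b c : Γ) :
    ε c a * ε a (b + c) = ε a b := by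
  rw [hε.apply_add_right, mul_left_comm, hε.mul_swap_s4, mul_one]

theorem GradedMul.brkt_mem (hμ : GradedMul 𝒜 μ) {a b : Γ} {x y : A}
    (hx : x ∈ 𝒜 a) (hy : y ∈ 𝒜 b) : brkt ε μ a b x y ∈ 𝒜 (a + b) :=
  sub_mem (hμ hx hy) (Submodule.smul_mem _ _ (add_comm b a ▸ hμ hy hx))

theorem IsCommFactor.smul_brkt_brkt (hε : IsCommFactor ε) (a b c : Γ) (w y z : A) :
    ε c a • brkt ε μ a (b + c) w (brkt ε μ b c y z) =
      ε c a • (μ w (μ y z) - ε b c • μ w (μ z y)) -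
        ε a b • (μ (μ y z) w - ε b c • μ (μ z y) w) := by
  simp only [brkt, map_sub, map_smul, LinearMap.sub_apply, LinearMap.smul_apply]
  rw [smul_sub (ε c a), smul_smul (ε c a), hε.mul_apply_add_right]

theorem IsCommFactor.cyclic_sum_brkt_brkt (hε : IsCommFactor ε) (a b c : Γ) (x y z : A) :
    ε c a • brkt ε μ a (b + c) (α x) (brkt ε μ b c y z) +
        ε a b • brkt ε μ b (c + a) (α y) (brkt ε μ c a z x) +
        ε b c • brkt ε μ c (a + b) (α z) (brkt ε μ a b x y) =
      ε c a • (ε a b • homAssociator μ α y x z - homAssociator μ α x y z) +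
        ε a b • (ε b c • homAssociator μ α z y x - homAssociator μ α y z x) +
        ε b c • (ε c a • homAssociator μ α x z y - homAssociator μ α z x y) := by
  simp only [hε.smul_brkt_brkt, homAssociator]
  module

theorem IsHomLeftSymmetric.cyclic_sum_brkt_brkt_eq_zero (h : IsHomLeftSymmetric 𝒜 ε μ α)
    (hε : IsCommFactor ε) {a b c : Γ} {x y z : A}
    (hx : x ∈ 𝒜 a) (hy : y ∈ 𝒜 b) (hz : z ∈ 𝒜 c) :
    ε c a • brkt ε μ a (b + c) (α x) (brkt ε μ b c y z) +
        ε a b • brkt ε μ b (c + a) (α y) (brkt ε μ c a z x) +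
        ε b c • brkt ε μ c (a + b) (α z) (brkt ε μ a b x y) = 0 := by
  rw [hε.cyclic_sum_brkt_brkt, ← h hx hy hz, ← h hy hz hx, ← h hz hx hy]
  simp only [sub_self, smul_zero, add_zero]

end

theorem homNovikov_to_homLie_general
    {K Γ A : Type*} [Field K] [AddCommGroup Γ] [AddCommGroup A] [Module K A]
    (𝒜 : Γ → Submodule K A) (ε : Γ → Γ → K)
    (μ : A →ₗ[K] A →ₗ[K] A) (α : A →ₗ[K] A)
    (hε : IsCommFactor ε) (hμ : GradedMul 𝒜 μ) (hLS : IsHomLeftSymmetric 𝒜 ε μ α) :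
    (∀ ⦃γ₁ γ₂ : Γ⦄ ⦃x y : A⦄, x ∈ 𝒜 γ₁ → y ∈ 𝒜 γ₂ →
        brkt ε μ γ₁ γ₂ x y ∈ 𝒜 (γ₁ + γ₂)) ∧
    (∀ ⦃γ₁ γ₂ : Γ⦄ ⦃x y : A⦄, x ∈ 𝒜 γ₁ → y ∈ 𝒜 γ₂ →
        brkt ε μ γ₁ γ₂ x y = -(ε γ₁ γ₂ • brkt ε μ γ₂ γ₁ y x)) ∧
    (∀ ⦃γ₁ γ₂ γ₃ : Γ⦄ ⦃x y z : A⦄, x ∈ 𝒜 γ₁ → y ∈ 𝒜 γ₂ → z ∈ 𝒜 γ₃ →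
        ε γ₃ γ₁ • brkt ε μ γ₁ (γ₂ + γ₃) (α x) (brkt ε μ γ₂ γ₃ y z)
          + ε γ₁ γ₂ • brkt ε μ γ₂ (γ₃ + γ₁) (α y) (brkt ε μ γ₃ γ₁ z x)
          + ε γ₂ γ₃ • brkt ε μ γ₃ (γ₁ + γ₂) (α z) (brkt ε μ γ₁ γ₂ x y) = 0) :=
  ⟨fun _ _ _ _ hx hy ↦ hμ.brkt_mem hx hy,
    fun γ₁ γ₂ x y _ _ ↦ brkt_eq_neg_smul_brkt (hε.mul_swap_s4 γ₁ γ₂) x y,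
    fun _ _ _ _ _ _ hx hy hz ↦ hLS.cyclic_sum_brkt_brkt_eq_zero hε hx hy hz⟩

/-- the ε-commutator of a Hom-Novikov color Hom-algebra is a
Hom-Lie color Hom-algebra bracket. -/
theorem homNovikov_to_homLie
    {K Γ A : Type*} [Field K] [AddCommGroup Γ] [AddCommGroup A] [Module K A]
    (𝒜 : Γ → Submodule K A) (ε : Γ → Γ → K)
    (μ : A →ₗ[K] A →ₗ[K] A) (α : A →ₗ[K] A)
    (hε : IsCommFactor ε) (hμ : GradedMul 𝒜 μ) (hα : GradedEnd 𝒜 α)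
    (hNov : IsHomNovikov 𝒜 ε μ α) :
    (∀ ⦃γ₁ γ₂ : Γ⦄ ⦃x y : A⦄, x ∈ 𝒜 γ₁ → y ∈ 𝒜 γ₂ →
        brkt ε μ γ₁ γ₂ x y ∈ 𝒜 (γ₁ + γ₂)) ∧
    (∀ ⦃γ₁ γ₂ : Γ⦄ ⦃x y : A⦄, x ∈ 𝒜 γ₁ → y ∈ 𝒜 γ₂ →
        brkt ε μ γ₁ γ₂ x y = -(ε γ₁ γ₂ • brkt ε μ γ₂ γ₁ y x)) ∧
    (∀ ⦃γ₁ γ₂ γ₃ : Γ⦄ ⦃x y z : A⦄, x ∈ 𝒜 γ₁ → y ∈ 𝒜 γ₂ → z ∈ 𝒜 γ₃ →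
        ε γ₃ γ₁ • brkt ε μ γ₁ (γ₂ + γ₃) (α x) (brkt ε μ γ₂ γ₃ y z)
          + ε γ₁ γ₂ • brkt ε μ γ₂ (γ₃ + γ₁) (α y) (brkt ε μ γ₃ γ₁ z x)
          + ε γ₂ γ₃ • brkt ε μ γ₃ (γ₁ + γ₂) (α z) (brkt ε μ γ₁ γ₂ x y) = 0) :=
  homNovikov_to_homLie_general 𝒜 ε μ α hε hμ hNov.isHomLeftSymmetric
end

section
/- If (A, ·, ε) is a Novikov color algebra and α: A → A is a morphism of Novikov color algebras, then A with the product x ·_α y = α(x·y) and twisting map α is a Hom-Novikov color Hom-algebra (Yau twist). -/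
open scoped TensorProduct

/-! If `α` is multiplicative for `μ`, then twisting `μ` by `α` and a twisting map `β` to `α ∘ β`
turns each term `μ (μ x y) (β z)` or `μ (β x) (μ y z)` into its image under `α ∘ α`. The identities
of the twisted product are therefore the images of the original ones under a linear map; a Novikov
color algebra is the case `β = id`. -/

section YauTwist

variable {K A : Type*} [Field K] [AddCommGroup A] [Module K A]

theorem twistMul_apply (α : A →ₗ[K] A) (μ : A →ₗ[K] A →ₗ[K] A) (x y : A) :
    twistMul α μ x y = α (μ x y) :=
  rfl

variable {μ : A →ₗ[K] A →ₗ[K] A} {α : A →ₗ[K] A}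

theorem twistMul_twistMul_map (hmor : ∀ x y : A, α (μ x y) = μ (α x) (α y)) (x y z : A) :
    twistMul α μ (twistMul α μ x y) (α z) = α (α (μ (μ x y) z)) := by
  rw [twistMul_apply, twistMul_apply, ← hmor]

theorem twistMul_map_twistMul (hmor : ∀ x y : A, α (μ x y) = μ (α x) (α y)) (x y z : A) :
    twistMul α μ (α x) (twistMul α μ y z) = α (α (μ x (μ y z))) := by
  rw [twistMul_apply, twistMul_apply, ← hmor]

variable {Γ : Type*} {𝒜 : Γ → Submodule K A}

theorem IsHomNovikov.twistMul {ε : Γ → Γ → K} {β : A →ₗ[K] A} (hNov : IsHomNovikov 𝒜 ε μ β)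
    (hmor : ∀ x y : A, α (μ x y) = μ (α x) (α y)) :
    IsHomNovikov 𝒜 ε (twistMul α μ) (α ∘ₗ β) := by
  obtain ⟨left_symm, right_comm⟩ := hNov
  constructor
  · intro γ₁ γ₂ γ₃ x y z hx hy hz
    simp only [LinearMap.comp_apply, twistMul_twistMul_map hmor, twistMul_map_twistMul hmor]
    simp only [← map_sub, left_symm hx hy hz, map_smul]
  · intro γ₁ γ₂ γ₃ x y z hx hy hz
    simp only [LinearMap.comp_apply, twistMul_twistMul_map hmor]
    rw [right_comm hx hy hz, map_smul, map_smul]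

theorem GradedMul.twistMul [AddCommGroup Γ] (hμ : GradedMul 𝒜 μ) (hα : GradedEnd 𝒜 α) :
    GradedMul 𝒜 (twistMul α μ) :=
  fun _ _ _ _ hx hy => hα (hμ hx hy)

theorem yauTwist_novikov_general [AddCommGroup Γ] {ε : Γ → Γ → K} {β : A →ₗ[K] A}
    (hμ : GradedMul 𝒜 μ) (hNov : IsHomNovikov 𝒜 ε μ β) (hα : GradedEnd 𝒜 α)
    (hmor : ∀ x y : A, α (μ x y) = μ (α x) (α y)) :
    GradedMul 𝒜 (twistMul α μ) ∧ IsHomNovikov 𝒜 ε (twistMul α μ) (α ∘ₗ β) :=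
  ⟨hμ.twistMul hα, hNov.twistMul hmor⟩

end YauTwist

/-- the Yau twist of a Novikov color algebra along a morphism `α`
is a Hom-Novikov color Hom-algebra. -/
theorem yauTwist_novikov
    {K Γ A : Type*} [Field K] [AddCommGroup Γ] [AddCommGroup A] [Module K A]
    (𝒜 : Γ → Submodule K A) (ε : Γ → Γ → K)
    (μ : A →ₗ[K] A →ₗ[K] A) (α : A →ₗ[K] A)
    (hε : IsCommFactor ε) (hμ : GradedMul 𝒜 μ)
    (hNov : IsHomNovikov 𝒜 ε μ (LinearMap.id))
    (hα : GradedEnd 𝒜 α) (hmor : ∀ x y : A, α (μ x y) = μ (α x) (α y)) :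
    GradedMul 𝒜 (twistMul α μ) ∧ IsHomNovikov 𝒜 ε (twistMul α μ) α :=
  yauTwist_novikov_general hμ hNov hα hmor
end
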